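/- The Schur multiplier H₂(A₅, ℤ) of the alternating group A₅ is isomorphic to ℤ/2ℤ. -/

import Mathlib

namespace SchurA5

/-- The (multiplicative, trivial action) 2-cocycle condition. -/
def Coc {G : Type} [Group G] (f : G → G → ℂˣ) : Prop :=
  ∀ g h k, f (g * h) k * f g h = f h k * f g (h * k)

theorem Coc.one_left {G : Type} [Group G] {f : G → G → ℂˣ} (hf : Coc f) (g : G) :
    f 1 g = f 1 1 := by
  have := hf 1 1 g
  simp only [one_mul] at this
  exact (mul_left_cancel this).symm

theorem Coc.one_right {G : Type} [Group G] {f : G → G → ℂˣ} (hf : Coc f) (g : G) :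
    f g 1 = f 1 1 := by
  have := hf g 1 1
  simp only [mul_one] at this
  exact mul_right_cancel this

/-- The central extension attached to a cocycle. -/
structure Ext {G : Type} [Group G] (f : G → G → ℂˣ) (hf : Coc f) where
  g : G
  a : ℂˣ

variable {G : Type} [Group G] {f : G → G → ℂˣ} {hf : Coc f}

instance : Mul (Ext f hf) := ⟨fun x y => ⟨x.g * y.g, x.a * y.a * f x.g y.g⟩⟩
instance : One (Ext f hf) := ⟨⟨1, (f 1 1)⁻¹⟩⟩
instance : Inv (Ext f hf) := ⟨fun x => ⟨x.g⁻¹, (x.a * f x.g⁻¹ x.g * f 1 1)⁻¹⟩⟩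

theorem Ext.ext_ga {x y : Ext f hf} (h1 : x.g = y.g) (h2 : x.a = y.a) : x = y := by
  cases x; cases y; cases h1; cases h2; rfl

@[simp] theorem Ext.mul_g (x y : Ext f hf) : (x * y).g = x.g * y.g := rfl
@[simp] theorem Ext.mul_a (x y : Ext f hf) : (x * y).a = x.a * y.a * f x.g y.g := rfl
@[simp] theorem Ext.one_g : (1 : Ext f hf).g = 1 := rfl
@[simp] theorem Ext.one_a : (1 : Ext f hf).a = (f 1 1)⁻¹ := rfl
@[simp] theorem Ext.inv_g (x : Ext f hf) : (x⁻¹).g = x.g⁻¹ := rfl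
@[simp] theorem Ext.inv_a (x : Ext f hf) : (x⁻¹).a = (x.a * f x.g⁻¹ x.g * f 1 1)⁻¹ := rfl

instance : Group (Ext f hf) := Group.ofLeftAxioms
  (by
    intro x y z
    refine Ext.ext_ga (by simp [mul_assoc]) ?_
    have := hf x.g y.g z.g
    simp only [Ext.mul_a, Ext.mul_g]
    calc _ = x.a * y.a * z.a * (f (x.g * y.g) z.g * f x.g y.g) := by
          simp only [mul_comm, mul_left_comm]
      _ = _ := by rw [this]; simp only [mul_comm, mul_left_comm])
  (by
    intro x
    refine Ext.ext_ga (by simp) ?_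
    simp [hf.one_left])
  (by
    intro x
    refine Ext.ext_ga (by simp) ?_
    simp only [Ext.mul_a, Ext.inv_a, Ext.inv_g, Ext.one_a]
    simp only [mul_inv_rev]
    have h : ∀ a b c : ℂˣ, a⁻¹ * (b⁻¹ * c⁻¹) * c * b = a⁻¹ := by
      intro a b c
      rw [← mul_assoc, inv_mul_cancel_right, inv_mul_cancel_right]
    exact h _ _ _)

variable (hf) in
/-- Projection to the base group. -/
def proj : Ext f hf →* G where
  toFun x := x.g
  map_one' := rfl
  map_mul' _ _ := rfl

variable (hf) in
/-- Inclusion of the kernel. -/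
def incl : ℂˣ →* Ext f hf where
  toFun c := ⟨1, c * (f 1 1)⁻¹⟩
  map_one' := Ext.ext_ga rfl (by simp)
  map_mul' a b := Ext.ext_ga (by simp) (by simp [mul_assoc, mul_comm, mul_left_comm])

theorem proj_incl (c : ℂˣ) : proj hf (incl hf c) = 1 := rfl

theorem proj_surj : Function.Surjective (proj hf) := fun g => ⟨⟨g, 1⟩, rfl⟩

theorem incl_inj : Function.Injective (incl hf) := by
  intro a b h
  simpa [incl] using h

theorem incl_comm (c : ℂˣ) (x : Ext f hf) : incl hf c * x = x * incl hf c := by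
  refine Ext.ext_ga (by simp [incl]) ?_
  simp [incl, hf.one_left, hf.one_right, mul_comm]

theorem ker_eq (x : Ext f hf) (h : x.g = 1) : ∃ c, x = incl hf c :=
  ⟨x.a * f 1 1, Ext.ext_ga h (by simp [incl])⟩

theorem sec_mul (g h : G) : (⟨g, 1⟩ * ⟨h, 1⟩ : Ext f hf) = incl hf (f g h) * ⟨g * h, 1⟩ := by
  refine Ext.ext_ga (by simp [incl]) ?_
  simp [incl, hf.one_left]

theorem comm_iff {x y : Ext f hf} (h : x.g * y.g = y.g * x.g) :
    x * y = y * x ↔ f x.g y.g = f y.g x.g := by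
  constructor
  · intro e
    have := congrArg Ext.a e
    simp only [Ext.mul_a] at this
    rw [mul_comm y.a] at this
    exact mul_left_cancel this
  · intro e
    refine Ext.ext_ga h ?_
    simp only [Ext.mul_a, e, mul_comm y.a]

/-- Divisibility of the multiplicative group of the complex numbers. -/
theorem baer : Module.Baer ℤ (Additive ℂˣ) := by
  have : DivisibleBy (Additive ℂˣ) ℕ := divisibleByOfSMulRightSurj _ _ (by
    intro n hn a
    obtain ⟨z, hz⟩ := IsAlgClosed.exists_pow_nat_eq (a.toMul : ℂ) (Nat.pos_of_ne_zero hn)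
    have hz0 : z ≠ 0 := by
      rintro rfl
      rw [zero_pow hn] at hz
      exact a.toMul.ne_zero hz.symm
    refine ⟨Additive.ofMul (Units.mk0 z hz0), ?_⟩
    apply Additive.toMul.injective
    apply Units.ext
    simpa using hz)
  have : DivisibleBy (Additive ℂˣ) ℤ := AddGroup.divisibleByIntOfDivisibleByNat _
  exact Module.Baer.of_divisible _

theorem exists_retract {H : Type} [CommGroup H] (i : ℂˣ →* H) (hi : Function.Injective i) :
    ∃ r : H →* ℂˣ, ∀ c, r (i c) = c := by
  obtain ⟨h, hh⟩ := baer.extension_property_addMonoidHom (MonoidHom.toAdditive i)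
    (by intro a b e; exact hi e) (AddMonoidHom.id _)
  refine ⟨MonoidHom.toAdditive.symm h, fun c => ?_⟩
  exact DFunLike.congr_fun hh (Additive.ofMul c)

/-- Transfer: if the restriction of the extension to `K` is commutative, then the index of `K`
kills the class of `f`. -/
theorem transfer_lemma [Finite G] (hf : Coc f) (K : Subgroup G)
    (hK : ∀ x y : Ext f hf, x.g ∈ K → y.g ∈ K → x * y = y * x) :
    ∃ t : G → ℂˣ, ∀ g h, f g h ^ K.index * t (g * h) = t g * t h := by
  let H : Subgroup (Ext f hf) := K.comap (proj hf)
  have hidx : H.index = K.index := Subgroup.index_comap_of_surjective K proj_surj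
  have : H.FiniteIndex := ⟨by rw [hidx]; exact Subgroup.index_ne_zero_of_finite⟩
  let : CommGroup H := { (inferInstance : Group H) with
    mul_comm := fun x y => Subtype.ext (hK x y x.2 y.2) }
  have hmem : ∀ c, incl hf c ∈ H := fun c => by
    change proj hf (incl hf c) ∈ K
    rw [proj_incl]; exact K.one_mem
  obtain ⟨r, hr⟩ := exists_retract ((incl hf).codRestrict H hmem)
    (fun a b e => incl_inj (congrArg Subtype.val e))
  have hT : ∀ c, MonoidHom.transfer r (incl hf c) = c ^ K.index := by
    intro c
    rw [MonoidHom.transfer_eq_pow r (incl hf c) (by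
      intro k g₀ _
      rw [← map_pow, mul_assoc, incl_comm, inv_mul_cancel_left])]
    rw [← hidx, ← hr (c ^ H.index)]
    congr 1
    apply Subtype.ext
    simp
  refine ⟨fun g => MonoidHom.transfer r ⟨g, 1⟩, fun g h => ?_⟩
  rw [← map_mul, sec_mul, map_mul, hT]

theorem cyclic_lemma [Finite G] (hf : Coc f) (g₀ : G) :
    ∃ t : G → ℂˣ, ∀ g h, f g h ^ (Subgroup.zpowers g₀).index * t (g * h) = t g * t h := by
  apply transfer_lemma hf
  intro x y hx hy
  let H : Subgroup (Ext f hf) := (Subgroup.zpowers g₀).comap (proj hf)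
  let φ : H →* Subgroup.zpowers g₀ := ((proj hf).comp H.subtype).codRestrict _ (fun z => z.2)
  have hc := MonoidHom.isMulCommutative_of_isCyclic_of_ker_le_center φ (by
    intro z hz
    rw [Subgroup.mem_center_iff]
    intro w
    have h1 : (z : Ext f hf).g = 1 := congrArg Subtype.val hz
    obtain ⟨c, hc⟩ := ker_eq _ h1
    apply Subtype.ext
    change (w : Ext f hf) * z = z * w
    rw [hc, incl_comm])
  exact congrArg Subtype.val (hc.is_comm.comm (⟨x, hx⟩ : H) ⟨y, hy⟩)

theorem klein_lemma [Finite G] (hf : Coc f) (K : Subgroup G) (x y : G)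
    (hxy : x * y = y * x)
    (hK : ∀ k ∈ K, k = 1 ∨ k = x ∨ k = y ∨ k = x * y)
    (hs : f x y = f y x) :
    ∃ t : G → ℂˣ, ∀ g h, f g h ^ K.index * t (g * h) = t g * t h := by
  apply transfer_lemma hf
  let X : Ext f hf := ⟨x, 1⟩
  let Y : Ext f hf := ⟨y, 1⟩
  have hXY : X * Y = Y * X := (comm_iff hxy).2 hs
  have key : ∀ C : Subgroup (Ext f hf), (∀ c, incl hf c ∈ C) → X ∈ C → Y ∈ C →
      ∀ e : Ext f hf, e.g ∈ K → e ∈ C := by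
    intro C hc hX hY e he
    have aux : ∀ w : Ext f hf, w ∈ C → e.g = w.g → e ∈ C := by
      intro w hw h
      obtain ⟨c, hcw⟩ := ker_eq (e * w⁻¹) (by simp [h])
      have : e = incl hf c * w := by rw [← hcw]; simp
      rw [this]
      exact C.mul_mem (hc c) hw
    rcases hK _ he with h | h | h | h
    · exact aux 1 C.one_mem h
    · exact aux X hX h
    · exact aux Y hY h
    · exact aux (X * Y) (C.mul_mem hX hY) h
  have memc : ∀ u v : Ext f hf, v ∈ Subgroup.centralizer {u} ↔ u * v = v * u := by
    intro u v
    rw [Subgroup.mem_centralizer_iff]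
    simp
  have h1 : ∀ e : Ext f hf, e.g ∈ K → X * e = e * X := fun e he => (memc _ _).1 <|
    key _ (fun c => (memc _ _).2 (incl_comm c _).symm) ((memc _ _).2 rfl) ((memc _ _).2 hXY) e he
  have h2 : ∀ e : Ext f hf, e.g ∈ K → Y * e = e * Y := fun e he => (memc _ _).1 <|
    key _ (fun c => (memc _ _).2 (incl_comm c _).symm) ((memc _ _).2 hXY.symm)
      ((memc _ _).2 rfl) e he
  intro u v hu hv
  exact (memc _ _).1 <| key _ (fun c => (memc _ _).2 (incl_comm c _).symm)
    ((memc _ _).2 (h1 u hu).symm) ((memc _ _).2 (h2 u hu).symm) v hv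

end SchurA5
namespace SchurA5
/-- The alternating group on five letters. -/
abbrev A5 := alternatingGroup (Fin 5)

/-- Codes (base 5) of matrices in `SL(2,5)` lifting the even permutations; the index is the base 5
number with digits `g 0, g 1, g 2`. -/
def table : List ℕ :=
  [0, 0, 0, 0, 0, 0, 0, 126, 64, 185, 0, 263, 0, 369, 49, 0, 243, 458, 0, 209, 0, 605, 332, 477, 0,
   0, 0, 402, 45, 273, 0, 0, 0, 0, 0, 471, 0, 0, 212, 533, 340, 0, 289, 0, 604, 131, 0, 61, 588, 0,
   0, 183, 0, 509, 62, 169, 0, 0, 431, 488, 0, 0, 0, 0, 0, 377, 107, 0, 0, 420, 239, 554, 0, 310, 0,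
   0, 499, 617, 0, 444, 557, 0, 230, 0, 303, 176, 60, 0, 0, 141, 0, 0, 0, 0, 0, 47, 409, 268, 0, 0,
   0, 316, 215, 226, 0, 362, 0, 46, 397, 0, 480, 328, 0, 623, 0, 92, 136, 199, 0, 0,
   0, 0, 0, 0, 0]

/-- Code of the lift of `g`. -/
def code (g : A5) : ℕ :=
  table.getD (25 * (g.1 0).val + 5 * (g.1 1).val + (g.1 2).val) 0

/-- Decoding a matrix. -/
def dec (n : ℕ) : Matrix (Fin 2) (Fin 2) (ZMod 5) :=
  !![((n / 125 : ℕ) : ZMod 5), ((n / 25 : ℕ) : ZMod 5); ((n / 5 : ℕ) : ZMod 5), (n : ZMod 5)]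

/-- Boolean check that `m * n` is `ε k` on codes, where `ε` is `1` or `-1 = 4`. -/
def chk (ε m n k : ℕ) : Bool :=
  ((m / 125) * (n / 125) + (m / 25) * (n / 5)) % 5 == (ε * (k / 125)) % 5 &&
  ((m / 125) * (n / 25) + (m / 25) * n) % 5 == (ε * (k / 25)) % 5 &&
  ((m / 5) * (n / 125) + m * (n / 5)) % 5 == (ε * (k / 5)) % 5 &&
  ((m / 5) * (n / 25) + m * n) % 5 == (ε * k) % 5

theorem chk_spec {ε m n k : ℕ} (h : chk ε m n k = true) :
    dec m * dec n = (ε : ZMod 5) • dec k := by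
  simp only [chk, Bool.and_eq_true, beq_iff_eq] at h
  obtain ⟨⟨⟨h1, h2⟩, h3⟩, h4⟩ := h
  have h1 := (ZMod.natCast_eq_natCast_iff _ _ 5).2 h1
  have h2 := (ZMod.natCast_eq_natCast_iff _ _ 5).2 h2
  have h3 := (ZMod.natCast_eq_natCast_iff _ _ 5).2 h3
  have h4 := (ZMod.natCast_eq_natCast_iff _ _ 5).2 h4
  push_cast at h1 h2 h3 h4
  simp only [dec, Matrix.mul_fin_two, h1, h2, h3, h4]
  ext i j
  fin_cases i <;> fin_cases j <;> simp

set_option maxRecDepth 100000 in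
theorem dec_ne : ∀ g : A5, code g % 5 ≠ 0 ∨ (code g / 5) % 5 ≠ 0 := by
  decide +kernel

/-- First involution. -/
def x : A5 := ⟨Equiv.swap 0 1 * Equiv.swap 2 3, by
  rw [Equiv.Perm.mem_alternatingGroup]; decide⟩
/-- Second involution. -/
def y : A5 := ⟨Equiv.swap 0 2 * Equiv.swap 1 3, by
  rw [Equiv.Perm.mem_alternatingGroup]; decide⟩
/-- A three-cycle. -/
def d : A5 := ⟨Equiv.swap 0 1 * Equiv.swap 1 2, by
  rw [Equiv.Perm.mem_alternatingGroup]; decide⟩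
/-- A five-cycle. -/
def c : A5 := ⟨Equiv.swap 0 1 * Equiv.swap 1 2 * Equiv.swap 2 3 * Equiv.swap 3 4, by
  rw [Equiv.Perm.mem_alternatingGroup]; decide⟩

/-- Boolean check for a pair of permutations. -/
def pairChk (g h : A5) : Prop := chk 1 (code g) (code h) (code (g * h)) = true ∨
    chk 4 (code g) (code h) (code (g * h)) = true

instance (g h : A5) : Decidable (pairChk g h) := inferInstanceAs (Decidable (_ ∨ _))

theorem chk_one : ∀ g : A5, pairChk g 1 := by decide +kernel
theorem chk_x : ∀ g : A5, pairChk g x := by decide +kernel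
theorem chk_y : ∀ g : A5, pairChk g y := by decide +kernel
theorem chk_d : ∀ g : A5, pairChk g d := by decide +kernel
theorem chk_c : ∀ g : A5, pairChk g c := by decide +kernel

theorem move_four : ∀ h : A5, ∃ i : Fin 5, (h * c ^ (i : ℕ)).1 4 = 4 := by decide +kernel
theorem move_three : ∀ h : A5, h.1 4 = 4 → ∃ j k : Fin 2,
    (h * (x ^ (j : ℕ) * y ^ (k : ℕ))).1 4 = 4 ∧ (h * (x ^ (j : ℕ) * y ^ (k : ℕ))).1 3 = 3 := by
  decide +kernel
theorem move_rest : ∀ h : A5, h.1 4 = 4 → h.1 3 = 3 → ∃ l : Fin 3, h = d ^ (l : ℕ) := by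
  decide +kernel

theorem pair_sign {g h : A5} (hp : pairChk g h) : ∃ u : ℤˣ,
    dec (code g) * dec (code h) = ((u : ℤ) : ZMod 5) • dec (code (g * h)) := by
  rcases hp with h1 | h1
  · exact ⟨1, by simpa using chk_spec h1⟩
  · refine ⟨-1, ?_⟩
    rw [chk_spec h1]
    congr 1

/-- The permutations on which the lift is multiplicative up to sign. -/
def good : Submonoid A5 where
  carrier := {h | ∀ g : A5, ∃ u : ℤˣ,
    dec (code g) * dec (code h) = ((u : ℤ) : ZMod 5) • dec (code (g * h))}
  one_mem' := fun g => pair_sign (chk_one g)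
  mul_mem' := by
    intro h k hh hk g
    obtain ⟨u, hu⟩ := hh g
    obtain ⟨v, hv⟩ := hk h
    obtain ⟨w, hw⟩ := hk (g * h)
    refine ⟨v * u * w, ?_⟩
    have hvv : ((v : ℤ) : ZMod 5) * ((v : ℤ) : ZMod 5) = 1 := by
      rcases Int.units_eq_one_or v with rfl | rfl <;> simp
    have e : dec (code (h * k)) = ((v : ℤ) : ZMod 5) • (dec (code h) * dec (code k)) := by
      rw [hv, smul_smul, hvv, one_smul]
    rw [e, Matrix.mul_smul, ← Matrix.mul_assoc, hu, Matrix.smul_mul, hw, smul_smul, smul_smul,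
      mul_assoc g h k]
    push_cast
    rfl

theorem good_of_mul {h k : A5} (hk : k ∈ good) (hh : h * k ∈ good) : h ∈ good := by
  have h1 : k⁻¹ ∈ Submonoid.powers k := by
    rw [mem_powers_iff_mem_zpowers]
    exact Subgroup.inv_mem _ (Subgroup.mem_zpowers k)
  obtain ⟨n, hn⟩ := h1
  have h2 : h = h * k * k ^ n := by
    have hkn : k ^ n = k⁻¹ := hn
    rw [hkn, mul_inv_cancel_right]
  rw [h2]
  exact good.mul_mem hh (good.pow_mem hk n)

theorem all_good (h : A5) : h ∈ good := by
  obtain ⟨i, hi⟩ := move_four h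
  refine good_of_mul (good.pow_mem (fun g => pair_sign (chk_c g)) i) ?_
  obtain ⟨j, k, h4, h3⟩ := move_three _ hi
  refine good_of_mul (good.mul_mem (good.pow_mem (fun g => pair_sign (chk_x g)) j)
    (good.pow_mem (fun g => pair_sign (chk_y g)) k)) ?_
  obtain ⟨l, hl⟩ := move_rest _ h4 h3
  rw [hl]
  exact good.pow_mem (fun g => pair_sign (chk_d g)) l

theorem xy_comm : x * y = y * x := by decide +kernel
theorem cent : ∀ k : A5, x * k = k * x → k = 1 ∨ k = x ∨ k = y ∨ k = x * y := by
  decide +kernel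
theorem card_cent : Nat.card (Subgroup.centralizer {x}) = 4 := by
  have : Nat.card {k : A5 // x * k = k * x} = 4 := by
    rw [Nat.card_eq_fintype_card]
    decide +kernel
  rw [← this]
  apply Nat.card_congr
  apply Equiv.subtypeEquivRight
  intro k
  rw [Subgroup.mem_centralizer_iff]
  simp

theorem exOrd : (∃ g : A5, orderOf g = 2) ∧ (∃ g : A5, orderOf g = 3) ∧
   (∃ g : A5, orderOf g = 5) := by
  have h : ∀ p : ℕ, p.Prime → p ∣ 60 → ∃ g : A5, orderOf g = p := by
    intro p hp hd
    have : Fact p.Prime := ⟨hp⟩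
    apply exists_prime_orderOf_dvd_card' p
    rw [nat_card_alternatingGroup]
    simpa [Nat.factorial] using hd
  exact ⟨h 2 (by norm_num) (by norm_num), h 3 (by norm_num) (by norm_num),
    h 5 (by norm_num) (by norm_num)⟩
end SchurA5
namespace SchurA5

theorem exists_cocycle : ∃ f : A5 → A5 → ℂˣ, Coc f ∧ f x y ≠ f y x := by
  have hne : ∀ g : A5, dec (code g) ≠ 0 := by
    intro g h0
    have h3 := congrFun (congrFun h0 1) 1
    have h2 := congrFun (congrFun h0 1) 0
    simp only [dec, Matrix.of_apply, Matrix.cons_val', Matrix.cons_val_one, Matrix.cons_val_zero,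
      Matrix.cons_val_fin_one, Matrix.zero_apply] at h2 h3
    rw [ZMod.natCast_eq_zero_iff] at h2 h3
    rcases dec_ne g with h | h <;> omega
  have hex : ∀ g h : A5, ∃ u : ℤˣ,
      dec (code g) * dec (code h) = ((u : ℤ) : ZMod 5) • dec (code (g * h)) := by
    exact fun g h => all_good h g
  choose u hu using hex
  have hinj : ∀ (a b : ℤˣ) (g : A5),
      ((a : ℤ) : ZMod 5) • dec (code g) = ((b : ℤ) : ZMod 5) • dec (code g) → a = b := by
    intro a b g h
    by_contra hab
    have : ((a : ℤ) : ZMod 5) - ((b : ℤ) : ZMod 5) ≠ 0 := by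
      rcases Int.units_eq_one_or a with rfl | rfl <;> rcases Int.units_eq_one_or b with rfl | rfl
      · exact absurd rfl hab
      · decide
      · decide
      · exact absurd rfl hab
    rw [← sub_eq_zero, ← sub_smul] at h
    have : Fact (Nat.Prime 5) := ⟨by norm_num⟩
    rcases smul_eq_zero.1 h with h | h
    · contradiction
    · exact hne g h
  have hcoc : ∀ g h k, u (g * h) k * u g h = u h k * u g (h * k) := by
    intro g h k
    apply hinj _ _ (g * h * k)
    have e1 : dec (code g) * dec (code h) * dec (code k) =
        ((u (g * h) k * u g h : ℤˣ) : ℤ) • dec (code (g * h * k)) := by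
      rw [hu, Matrix.smul_mul, hu, smul_smul, mul_comm]
      simp [← Int.cast_smul_eq_zsmul (ZMod 5)]
    have e2 : dec (code g) * dec (code h) * dec (code k) =
        ((u h k * u g (h * k) : ℤˣ) : ℤ) • dec (code (g * h * k)) := by
      rw [Matrix.mul_assoc, hu, Matrix.mul_smul, hu, smul_smul, ← mul_assoc g h k]
      simp [← Int.cast_smul_eq_zsmul (ZMod 5)]
    rw [Int.cast_smul_eq_zsmul, Int.cast_smul_eq_zsmul, ← e1, ← e2]
  let φ : ℤˣ →* ℂˣ := Units.map (Int.castRingHom ℂ).toMonoidHom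
  have hφ : Function.Injective φ := by
    intro a b h
    have := congrArg Units.val h
    apply Units.ext
    have h2 : ((a : ℤ) : ℂ) = ((b : ℤ) : ℂ) := this
    exact_mod_cast h2
  refine ⟨fun g h => φ (u g h), fun g h k => ?_, fun h => ?_⟩
  · simp only [← map_mul, hcoc]
  · have hφxy := hφ h
    have e : dec (code x) * dec (code y) = dec (code y) * dec (code x) := by
      rw [hu, hu, hφxy, xy_comm]
    revert e
    decide +kernel

theorem index_zpowers (g : A5) (n : ℕ) (h : orderOf g * n = 60) :
    (Subgroup.zpowers g).index = n := by
  have h1 := (Subgroup.zpowers g).card_mul_index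
  rw [Nat.card_zpowers, nat_card_alternatingGroup] at h1
  have h2 : (Nat.card (Fin 5)).factorial / 2 = 60 := by simp [Nat.factorial]
  rw [h2, ← h] at h1
  have : 0 < orderOf g := orderOf_pos g
  exact Nat.eq_of_mul_eq_mul_left this h1

theorem index_cent : (Subgroup.centralizer {x}).index = 15 := by
  have h1 := (Subgroup.centralizer {x}).card_mul_index
  rw [card_cent, nat_card_alternatingGroup] at h1
  have h2 : (Nat.card (Fin 5)).factorial / 2 = 60 := by simp [Nat.factorial]
  omega

/-- `f` is a coboundary. -/
def Cob (f : A5 → A5 → ℂˣ) : Prop := ∃ t : A5 → ℂˣ, ∀ g h, f g h * t (g * h) = t g * t h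

theorem Cob.comb {f : A5 → A5 → ℂˣ} {m n : ℕ} (a b : ℤ) (k : ℕ) (hk : a * m + b * n = k)
    (h1 : Cob fun g h => f g h ^ m) (h2 : Cob fun g h => f g h ^ n) :
    Cob fun g h => f g h ^ k := by
  obtain ⟨t, ht⟩ := h1
  obtain ⟨s, hs⟩ := h2
  refine ⟨fun g => t g ^ a * s g ^ b, fun g h => ?_⟩
  have e1 := congrArg (· ^ a) (ht g h)
  have e2 := congrArg (· ^ b) (hs g h)
  simp only [mul_zpow] at e1 e2
  have : f g h ^ k = (f g h ^ m) ^ a * (f g h ^ n) ^ b := by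
    rw [← zpow_natCast, ← zpow_natCast, ← zpow_natCast, ← zpow_mul, ← zpow_mul, ← zpow_add, ← hk]
    congr 1
    ring
  simp only [this]
  calc _ = ((f g h ^ m) ^ a * t (g * h) ^ a) * ((f g h ^ n) ^ b * s (g * h) ^ b) := by
        rw [mul_mul_mul_comm]
    _ = _ := by rw [e1, e2, mul_mul_mul_comm]

theorem cob_two {f : A5 → A5 → ℂˣ} (hf : Coc f) : Cob fun g h => f g h ^ 2 := by
  obtain ⟨⟨g2, h2⟩, ⟨g3, h3⟩, ⟨g5, h5⟩⟩ := exOrd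
  have c2 := cyclic_lemma hf g2
  have c3 := cyclic_lemma hf g3
  have c5 := cyclic_lemma hf g5
  rw [index_zpowers g2 30 (by rw [h2])] at c2
  rw [index_zpowers g3 20 (by rw [h3])] at c3
  rw [index_zpowers g5 12 (by rw [h5])] at c5
  have c10 : Cob fun g h => f g h ^ 10 := Cob.comb (m := 30) (n := 20) 1 (-1) 10 (by norm_num) c2 c3
  exact Cob.comb (m := 10) (n := 12) (-1) 1 2 (by norm_num) c10 c5

theorem cob_of_symm {f : A5 → A5 → ℂˣ} (hf : Coc f) (h : f x y = f y x) : Cob f := by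
  have c := klein_lemma hf (Subgroup.centralizer {x}) x y xy_comm (by
    intro k hk
    apply cent
    rw [Subgroup.mem_centralizer_iff] at hk
    exact hk x rfl) h
  rw [index_cent] at c
  have := Cob.comb (m := 15) (n := 2) 1 (-7) 1 (by norm_num) c (cob_two hf)
  simpa using this

theorem Cob.symm {f : A5 → A5 → ℂˣ} (hf : Cob f) : f x y = f y x := by
  obtain ⟨t, ht⟩ := hf
  have h1 := ht x y
  have h2 := ht y x
  rw [mul_comm (t y), ← h1, xy_comm] at h2
  exact (mul_right_cancel h2).symm

open groupCohomology

/-- The coefficient module. -/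
abbrev M : Rep ℤ A5 := Rep.trivial ℤ A5 (Additive ℂˣ)

/-- Function attached to a cochain. -/
def fn (c : A5 × A5 → Additive ℂˣ) : A5 → A5 → ℂˣ := fun g h => (c (g, h)).toMul

theorem mem_coc (c : A5 × A5 → Additive ℂˣ) :
    (c : A5 × A5 → M) ∈ cocycles₂ M ↔ Coc (fn c) := by
  rw [mem_cocycles₂_iff]
  rfl

theorem mem_cob (c : A5 × A5 → Additive ℂˣ) :
    (c : A5 × A5 → M) ∈ coboundaries₂ M ↔ Cob (fn c) := by
  constructor
  · rintro ⟨t, ht⟩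
    refine ⟨fun g => (show Additive ℂˣ from t g).toMul, fun g h => ?_⟩
    have := congrFun ht (g, h)
    have e : (show Additive ℂˣ from t h) - (show Additive ℂˣ from t (g * h)) +
      (show Additive ℂˣ from t g) = c (g, h) := this
    change (c (g, h)).toMul * _ = _
    rw [← e]
    apply Additive.ofMul.injective
    simp only [toMul_add, toMul_sub, ofMul_mul, ofMul_div, ofMul_toMul]
    abel
  · rintro ⟨t, ht⟩
    refine ⟨fun g => (Additive.ofMul (t g) : Additive ℂˣ), ?_⟩
    funext ⟨g, h⟩
    change (Additive.ofMul (t h)) - (Additive.ofMul (t (g * h))) + (Additive.ofMul (t g)) = c (g, h)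
    have : Additive.ofMul (t g) + Additive.ofMul (t h) = c (g, h) + Additive.ofMul (t (g * h)) :=
      (ht g h).symm
    rw [sub_add_eq_add_sub, add_comm, this, add_sub_cancel_right]

theorem coc_sign {f : A5 → A5 → ℂˣ} (hf : Coc f) (h : f x y ≠ f y x) :
    f x y = - f y x := by
  have h2 : f x y ^ 2 = f y x ^ 2 := (cob_two hf).symm
  have h3 : (f x y : ℂ) ^ 2 = (f y x : ℂ) ^ 2 := by exact_mod_cast congrArg Units.val h2
  rcases sq_eq_sq_iff_eq_or_eq_neg.1 h3 with h4 | h4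
  · exact absurd (Units.ext h4) h
  · exact Units.ext (by simpa using h4)

theorem card_H2 : Nat.card (H2 M) = 2 := by
  obtain ⟨f₀, hf₀, hne⟩ := exists_cocycle
  let c₀ : cocycles₂ M := ⟨fun p => Additive.ofMul (f₀ p.1 p.2), (mem_coc _).2 hf₀⟩
  have h0 : H2π M c₀ ≠ 0 := by
    rw [Ne, H2π_eq_zero_iff]
    intro h
    exact hne ((mem_cob _).1 h).symm
  have hall : ∀ z : H2 M, z = 0 ∨ z = H2π M c₀ := by
    intro z
    induction z using H2_induction_on with
    | h c =>
      have hc : Coc (fn c.1) := (mem_coc c.1).1 c.2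
      by_cases hs : fn c.1 x y = fn c.1 y x
      · left
        rw [H2π_eq_zero_iff]
        exact (mem_cob c.1).2 (cob_of_symm hc hs)
      · right
        rw [H2π_eq_iff]
        have hd : Coc (fn (c - c₀ : cocycles₂ M).1) := (mem_coc _).1 (c - c₀).2
        refine (mem_cob (c - c₀ : cocycles₂ M).1).2 (cob_of_symm hd ?_)
        have e : ∀ g h, fn (c - c₀ : cocycles₂ M).1 g h = fn c.1 g h / f₀ g h := fun g h => rfl
        rw [e, e, coc_sign hc hs, coc_sign hf₀ hne, neg_div_neg_eq]
  rw [Nat.card_eq_two_iff]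
  refine ⟨0, H2π M c₀, h0.symm, ?_⟩
  ext z
  simpa using hall z

end SchurA5

/-- The Schur multiplier of `A₅` is `ℤ/2ℤ`.  For a finite group the Schur
multiplier `H₂(G, ℤ)` can equivalently be computed as the second group
cohomology `H²(G, ℂˣ)` with trivial coefficients, which is what we state:
`H²(A₅, ℂˣ) ≅ ℤ/2ℤ`. -/
theorem schur_multiplier_A5 :
    Nonempty ((groupCohomology
        (Rep.trivial ℤ (alternatingGroup (Fin 5)) (Additive ℂˣ)) 2) ≃ₗ[ℤ] ZMod 2) := by
  have hcard := SchurA5.card_H2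
  have : Fact (Nat.Prime 2) := ⟨Nat.prime_two⟩
  have hcyc : IsAddCyclic (groupCohomology.H2 SchurA5.M) := isAddCyclic_of_prime_card hcard
  have e : groupCohomology.H2 SchurA5.M ≃+ ZMod 2 :=
    addEquivOfPrimeCardEq (p := 2) hcard (by simp)
  refine ⟨{ e with map_smul' := fun n z => ?_ }⟩
  exact (congrArg e (int_smul_eq_zsmul _ n z)).trans
    ((map_zsmul e n z).trans (int_smul_eq_zsmul _ n (e z)).symm)
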